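/- Let N ≥ 2, let Ω ⊆ ℝ^N be a nonempty bounded open set, let λ : Ω → ℝ be nonnegative, and let f : Ω × ℝ → ℝ be such that for each x ∈ Ω the map s ↦ f(x,s) is nonincreasing and continuous. Let u, v : ℝ^N → ℝ be continuous on cl(Ω), twice continuously differentiable on Ω, and satisfy −Δu(x) = f(x, u(x)) + λ(x)·v(x) and −Δv(x) = f(x, v(x)) + λ(x)·u(x) for all x ∈ Ω. If u = v on ∂Ω, then u = v on Ω. -/

import Mathlib

/-!
Put `w = u - v`. Where `w > 0`, subtracting the two equations gives
`Δw = λ w - (f(x,u) - f(x,v)) ≥ 0`, since `λ ≥ 0` and `f(x,·)` is nonincreasing. Hence `w` is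
subharmonic where it is positive, and the weak maximum principle together with `w = 0` on `∂Ω` gives
`w ≤ 0`; exchanging `u` and `v` gives `w = 0`.

The maximum principle is obtained by perturbation: if `w` is positive somewhere, then for small
`ε > 0` the function `w + ε‖x‖²` attains its maximum over `cl(Ω)` at an interior point where `w > 0`
and its Laplacian is at least `2Nε > 0`. This contradicts the second-order necessary condition at
a maximum (`iteratedFDeriv_two_nonpos_of_isLocalMax`).
-/

open MeasureTheory Asymptotics Filter Metric Set

noncomputable def laplacian {N : ℕ} (u : EuclideanSpace ℝ (Fin N) → ℝ)
    (x : EuclideanSpace ℝ (Fin N)) : ℝ :=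
  ∑ i : Fin N, iteratedFDeriv ℝ 2 u x ![EuclideanSpace.single i 1, EuclideanSpace.single i 1]

noncomputable def laplacianWithin {N : ℕ} (u : EuclideanSpace ℝ (Fin N) → ℝ)
    (s : Set (EuclideanSpace ℝ (Fin N))) (x : EuclideanSpace ℝ (Fin N)) : ℝ :=
  ∑ i : Fin N, iteratedFDerivWithin ℝ 2 u s x ![EuclideanSpace.single i 1, EuclideanSpace.single i 1]

def VanishesInfOrder {N : ℕ} (w : EuclideanSpace ℝ (Fin N) → ℝ)
    (x₀ : EuclideanSpace ℝ (Fin N)) : Prop :=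
  ∃ ε > (0:ℝ), ∀ m > (0:ℝ),
    (fun r : ℝ => ∫ x in ball x₀ r, |w x| ^ ε) =o[nhdsWithin 0 (Ioi 0)] fun r : ℝ => r ^ m

noncomputable def spow (t s : ℝ) : ℝ := Real.sign t * |t| ^ s

noncomputable def distToInt (x : ℝ) : ℝ := min (Int.fract x) (1 - Int.fract x)

def IsRadial {N : ℕ} (u : EuclideanSpace ℝ (Fin N) → ℝ) : Prop :=
  ∃ U : ℝ → ℝ, ∀ x, u x = U ‖x‖

open Topology in
/-- Second-order necessary condition: the Hessian is negative semidefinite at a local maximum. -/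
lemma iteratedFDeriv_two_nonpos_of_isLocalMax {E : Type*} [NormedAddCommGroup E]
    [NormedSpace ℝ E] {g : E → ℝ} {x : E} (hg : ContDiffAt ℝ 2 g x) (hmax : IsLocalMax g x)
    (e : E) : iteratedFDeriv ℝ 2 g x ![e, e] ≤ 0 := by
  rw [iteratedFDeriv_two_apply]
  simp only [Matrix.cons_val_zero, Matrix.cons_val_one]
  have hline : ∀ t : ℝ, HasDerivAt (fun t : ℝ => x + t • e) e t := fun t => by
    simpa using ((hasDerivAt_id t).smul_const e).const_add x
  have hx0 : x + (0 : ℝ) • e = x := by simp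
  have hcont : Tendsto (fun t : ℝ => x + t • e) (𝓝 0) (𝓝 x) := by
    have h := (hline 0).continuousAt
    rwa [ContinuousAt, hx0] at h
  have hd : ∀ᶠ y in 𝓝 x, DifferentiableAt ℝ g y := by
    filter_upwards [hg.eventually (by simp)] with y hy
    exact hy.differentiableAt (by simp)
  have hderiv : deriv (fun t : ℝ => g (x + t • e)) =ᶠ[𝓝 0] fun t => fderiv ℝ g (x + t • e) e := by
    filter_upwards [hcont.eventually hd] with t ht
    exact (ht.hasFDerivAt.comp_hasDerivAt t (hline t)).deriv
  have hdd : DifferentiableAt ℝ (fderiv ℝ g) x :=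
    (hg.fderiv_right (m := 1) (by norm_num)).differentiableAt (by simp)
  have hdd2 : HasDerivAt (fun t : ℝ => fderiv ℝ g (x + t • e) e)
      (fderiv ℝ (fderiv ℝ g) x e e) 0 := by
    have h1 : HasFDerivAt (fderiv ℝ g) (fderiv ℝ (fderiv ℝ g) x) (x + (0 : ℝ) • e) := by
      rw [hx0]; exact hdd.hasFDerivAt
    have h2 := h1.comp_hasDerivAt (0 : ℝ) (hline 0)
    simpa using h2.clm_apply (hasDerivAt_const (0 : ℝ) e)
  have hsec : deriv (deriv fun t : ℝ => g (x + t • e)) 0 = fderiv ℝ (fderiv ℝ g) x e e := by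
    rw [hderiv.deriv_eq, hdd2.deriv]
  have hmax' : IsLocalMax (fun t : ℝ => g (x + t • e)) 0 := by
    have h := hcont.eventually hmax
    filter_upwards [h] with t ht
    simpa using ht
  by_contra! hpos
  -- A positive second derivative makes `0` a local minimum of the restriction as well, so the
  -- restriction is locally constant and its second derivative vanishes.
  have hmin : IsLocalMin (fun t : ℝ => g (x + t • e)) 0 := by
    apply isLocalMin_of_deriv_deriv_pos
    · rw [hsec]; exact hpos
    · exact hmax'.deriv_eq_zero
    · refine ContinuousAt.comp (f := fun t : ℝ => x + t • e) (g := g) ?_ (hline 0).continuousAt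
      rw [hx0]; exact hg.continuousAt
  have hconst : (fun t : ℝ => g (x + t • e)) =ᶠ[𝓝 0] fun _ => g x := by
    filter_upwards [hmax', hmin] with t h1 h2
    simp only [hx0] at h1 h2
    exact le_antisymm h1 h2
  have h0 : deriv (deriv fun t : ℝ => g (x + t • e)) 0 = 0 := by
    rw [hconst.deriv.deriv_eq]; simp
  rw [← hsec, h0] at hpos
  exact lt_irrefl _ hpos

lemma laplacian_add_of_contDiffAt {N : ℕ} {g h : EuclideanSpace ℝ (Fin N) → ℝ}
    {x : EuclideanSpace ℝ (Fin N)} (hg : ContDiffAt ℝ 2 g x) (hh : ContDiffAt ℝ 2 h x) :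
    laplacian (g + h) x = laplacian g x + laplacian h x := by
  simp only [laplacian, ← Finset.sum_add_distrib]
  refine Finset.sum_congr rfl fun i _ => ?_
  rw [iteratedFDeriv_add_apply hg hh]
  rfl

lemma laplacian_const_smul_of_contDiffAt {N : ℕ} {g : EuclideanSpace ℝ (Fin N) → ℝ}
    {x : EuclideanSpace ℝ (Fin N)} (c : ℝ) (hg : ContDiffAt ℝ 2 g x) :
    laplacian (c • g) x = c * laplacian g x := by
  simp only [laplacian, Finset.mul_sum]
  refine Finset.sum_congr rfl fun i _ => ?_
  rw [iteratedFDeriv_const_smul_apply hg]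
  rfl

lemma laplacian_norm_sq {N : ℕ} (x : EuclideanSpace ℝ (Fin N)) :
    laplacian (fun y : EuclideanSpace ℝ (Fin N) => ‖y‖ ^ 2) x = 2 * N := by
  have h : fderiv ℝ (fun y : EuclideanSpace ℝ (Fin N) => ‖y‖ ^ 2)
      = ⇑((2 : ℝ) • innerSL ℝ (E := EuclideanSpace ℝ (Fin N))) := by
    ext1 y
    rw [fderiv_norm_sq_apply]
    ext z
    simp [two_smul]
  have h2 : ∀ i : Fin N, iteratedFDeriv ℝ 2 (fun y : EuclideanSpace ℝ (Fin N) => ‖y‖ ^ 2) x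
      ![EuclideanSpace.single i 1, EuclideanSpace.single i 1] = 2 := fun i => by
    rw [iteratedFDeriv_two_apply, h, ContinuousLinearMap.fderiv]
    simp only [Matrix.cons_val_zero, Matrix.cons_val_one, ContinuousLinearMap.smul_apply]
    erw [innerSL_apply_apply]
    simp
  simp [laplacian, h2, mul_comm]

/-- Comparison half of the theorem: the maximum principle applied to `u - v`. -/
lemma le_of_coupled_system {N : ℕ} (hN : 2 ≤ N) {Ω : Set (EuclideanSpace ℝ (Fin N))}
    (hΩopen : IsOpen Ω) (hΩbdd : Bornology.IsBounded Ω)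
    {lam : EuclideanSpace ℝ (Fin N) → ℝ} (hlam : ∀ x ∈ Ω, 0 ≤ lam x)
    {f : EuclideanSpace ℝ (Fin N) → ℝ → ℝ}
    (hfanti : ∀ x ∈ Ω, Antitone (f x))
    {u v : EuclideanSpace ℝ (Fin N) → ℝ}
    (hucont : ContinuousOn u (closure Ω)) (hvcont : ContinuousOn v (closure Ω))
    (hu : ContDiffOn ℝ 2 u Ω) (hv : ContDiffOn ℝ 2 v Ω)
    (heq1 : ∀ x ∈ Ω, -laplacian u x = f x (u x) + lam x * v x)
    (heq2 : ∀ x ∈ Ω, -laplacian v x = f x (v x) + lam x * u x)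
    (hbd : ∀ x ∈ frontier Ω, u x = v x) :
    ∀ x ∈ Ω, u x ≤ v x := by
  intro x₁ hx₁
  by_contra! hlt
  obtain ⟨R, hRpos, hR⟩ := hΩbdd.closure.exists_pos_norm_le
  -- `ε` is chosen so that `ε R² < u x₁ - v x₁`.
  set ε : ℝ := (u x₁ - v x₁) / (2 * R ^ 2) with hε
  have hR2 : 0 < R ^ 2 := by positivity
  have hεpos : 0 < ε := div_pos (by linarith) (by positivity)
  have hεR : ε * R ^ 2 < u x₁ - v x₁ := by
    have : ε * R ^ 2 = (u x₁ - v x₁) / 2 := by rw [hε]; field_simp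
    linarith
  set g : EuclideanSpace ℝ (Fin N) → ℝ :=
    u + (-1 : ℝ) • v + ε • (fun y : EuclideanSpace ℝ (Fin N) => ‖y‖ ^ 2) with hg
  have hgx : ∀ y, g y = u y - v y + ε * ‖y‖ ^ 2 := fun y => by
    simp [hg, sub_eq_add_neg]
  have hgcont : ContinuousOn g (closure Ω) :=
    (hucont.add (hvcont.const_smul (-1 : ℝ))).add
      ((continuous_norm.pow 2).continuousOn.const_smul ε)
  obtain ⟨x₀, hx₀, hmax⟩ := hΩbdd.isCompact_closure.exists_isMaxOn
    ⟨x₁, subset_closure hx₁⟩ hgcont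
  have h10 : g x₁ ≤ g x₀ := hmax (subset_closure hx₁)
  rw [hgx, hgx] at h10
  have hn0 : ε * ‖x₀‖ ^ 2 ≤ ε * R ^ 2 := by
    gcongr
    exact hR x₀ hx₀
  have hn1 : 0 ≤ ε * ‖x₁‖ ^ 2 := by positivity
  have hw0 : 0 < u x₀ - v x₀ := by linarith
  have hx₀Ω : x₀ ∈ Ω := by
    by_contra hnot
    have hfr : x₀ ∈ frontier Ω := by
      rw [hΩopen.frontier_eq]; exact ⟨hx₀, hnot⟩
    linarith [hbd x₀ hfr]
  have hnhds := hΩopen.mem_nhds hx₀Ω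
  have hloc : IsLocalMax g x₀ := by
    filter_upwards [hnhds] with y hy
    exact hmax (subset_closure hy)
  have hcu : ContDiffAt ℝ 2 u x₀ := hu.contDiffAt hnhds
  have hcv : ContDiffAt ℝ 2 v x₀ := hv.contDiffAt hnhds
  have hcn : ContDiffAt ℝ 2 (fun y : EuclideanSpace ℝ (Fin N) => ‖y‖ ^ 2) x₀ :=
    (contDiff_norm_sq ℝ).contDiffAt
  have hcv' : ContDiffAt ℝ 2 ((-1 : ℝ) • v) x₀ := hcv.const_smul (-1 : ℝ)
  have hcn' : ContDiffAt ℝ 2 (ε • fun y : EuclideanSpace ℝ (Fin N) => ‖y‖ ^ 2) x₀ :=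
    hcn.const_smul ε
  have hcuv : ContDiffAt ℝ 2 (u + (-1 : ℝ) • v) x₀ := hcu.add hcv'
  have hlap : laplacian g x₀ = laplacian u x₀ + -1 * laplacian v x₀ + ε * (2 * N) := by
    rw [hg, laplacian_add_of_contDiffAt hcuv hcn', laplacian_add_of_contDiffAt hcu hcv',
      laplacian_const_smul_of_contDiffAt _ hcv, laplacian_const_smul_of_contDiffAt _ hcn,
      laplacian_norm_sq]
  have hle : laplacian g x₀ ≤ 0 := Finset.sum_nonpos fun i _ =>
    iteratedFDeriv_two_nonpos_of_isLocalMax (hcuv.add hcn') hloc _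
  have hfle : f x₀ (u x₀) ≤ f x₀ (v x₀) := hfanti x₀ hx₀Ω (by linarith)
  have hlw : 0 ≤ lam x₀ * (u x₀ - v x₀) := mul_nonneg (hlam x₀ hx₀Ω) hw0.le
  have hNpos : (0 : ℝ) < N := by exact_mod_cast (by omega : 0 < N)
  have hεN : 0 < ε * (2 * N) := by positivity
  linarith [heq1 x₀ hx₀Ω, heq2 x₀ hx₀Ω, mul_sub (lam x₀) (u x₀) (v x₀)]


theorem gradient_symmetry {N : ℕ} (hN : 2 ≤ N) {Ω : Set (EuclideanSpace ℝ (Fin N))}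
    (hΩopen : IsOpen Ω) (hΩne : Ω.Nonempty) (hΩbdd : Bornology.IsBounded Ω)
    {lam : EuclideanSpace ℝ (Fin N) → ℝ} (hlam : ∀ x ∈ Ω, 0 ≤ lam x)
    {f : EuclideanSpace ℝ (Fin N) → ℝ → ℝ}
    (hfanti : ∀ x ∈ Ω, Antitone (f x)) (hfcont : ∀ x ∈ Ω, Continuous (f x))
    {u v : EuclideanSpace ℝ (Fin N) → ℝ}
    (hucont : ContinuousOn u (closure Ω)) (hvcont : ContinuousOn v (closure Ω))
    (hu : ContDiffOn ℝ 2 u Ω) (hv : ContDiffOn ℝ 2 v Ω)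
    (heq1 : ∀ x ∈ Ω, -laplacian u x = f x (u x) + lam x * v x)
    (heq2 : ∀ x ∈ Ω, -laplacian v x = f x (v x) + lam x * u x)
    (hbd : ∀ x ∈ frontier Ω, u x = v x) :
    ∀ x ∈ Ω, u x = v x := by
  intro x hx
  exact le_antisymm
    (le_of_coupled_system hN hΩopen hΩbdd hlam hfanti hucont hvcont hu hv heq1 heq2 hbd x hx)
    (le_of_coupled_system hN hΩopen hΩbdd hlam hfanti hvcont hucont hv hu heq2 heq1
      (fun y hy => (hbd y hy).symm) x hx)
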